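/- arXiv:2410.18965 — 6 statements merged into one kernel-verified Lean document; each statement's English description precedes it below -/
import Mathlib

section
/- Suppose rank(X_0) = r = r_A (exact-parametrization) and 0 < η ≤ 1. Then for every t ≥ 0 the ScaledGD iterate satisfies X_t = Q Φ_t for some invertible matrix Φ_t ∈ R^{r×r} (in particular every column of X_t lies in the column space of A and X_tᵀX_t is invertible, so the iteration is well defined), and moreover the smallest eigenvalue of X_{t+1}X_{t+1}ᵀ satisfies σ_r(X_{t+1}X_{t+1}ᵀ) ≥ (1−η)^{2t+2} σ_r(X_0X_0ᵀ) + (1−η) σ_r(A) − (1−η)^{2t+3} σ_r(A). -/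
open Matrix BigOperators

/-- `kthEig M k` is the `k`-th largest eigenvalue of a real symmetric matrix `M`,
via the Courant–Fischer max-min characterization. -/
noncomputable def kthEig {n : ℕ} (M : Matrix (Fin n) (Fin n) ℝ) (k : ℕ) : ℝ :=
  sSup {c : ℝ | ∃ V : Submodule ℝ (Fin n → ℝ), Module.finrank ℝ V = k ∧
    ∀ x ∈ V, c * (∑ i, x i ^ 2) ≤ ∑ i, x i * (M *ᵥ x) i}

/-! Write `X t = Q * Φ t`, so that ScaledGD runs on the small square matrices `Φ t` with target
`S = diag d`. There `Φ ↦ (1 - η) Φ + η S Φ⁻ᵀ`, and the Gram matrix `P = Φ Φᵀ` evolves by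
`P ↦ (1 - η)² P + 2 η (1 - η) S + η² S P⁻¹ S`. The last term is positive definite, which keeps `Φ`
invertible; dropping it and using `2 η (1 - η) + (1 - η)³ ≥ 1 - η` gives by induction the Loewner
bound `P t ≥ (1 - η)^(2t) P 0 + ((1 - η) - (1 - η)^(2t+1)) S`. Finally, the `r`-th eigenvalue of
`Q P Qᵀ` is the largest `c` with `c I ≤ P`, which turns the Loewner bound into the claim. -/

section Isometry

lemma isUnit_of_rank_mul_eq_card {K m n : Type*} [Field K] [Fintype n] [DecidableEq n]
    {Q : Matrix m n K} {Φ : Matrix n n K} (h : (Q * Φ).rank = Fintype.card n) : IsUnit Φ := by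
  have hrank : Φ.rank = Fintype.card n :=
    le_antisymm Φ.rank_le_card_width (h ▸ rank_mul_le_right Q Φ)
  rw [← linearIndependent_cols_iff_isUnit, linearIndependent_iff_card_eq_finrank_span,
    Set.finrank, ← rank_eq_finrank_span_cols, hrank]

variable {m n : Type*} [Fintype m] [Fintype n]

lemma dotProduct_conj_mulVec {R : Type*} [CommSemiring R] (Q : Matrix m n R) (S : Matrix n n R)
    (x : m → R) : x ⬝ᵥ ((Q * S * Qᵀ) *ᵥ x) = (Qᵀ *ᵥ x) ⬝ᵥ (S *ᵥ (Qᵀ *ᵥ x)) := by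
  rw [← mulVec_mulVec, ← mulVec_mulVec, dotProduct_mulVec, ← mulVec_transpose]

variable [DecidableEq n]

lemma transpose_mul_self_of_orthonormal {R p : Type*} [CommSemiring R] {Q : Matrix m n R}
    (hQ : Qᵀ * Q = 1) (Φ : Matrix n p R) : (Q * Φ)ᵀ * (Q * Φ) = Φᵀ * Φ := by
  rw [transpose_mul, Matrix.mul_assoc, ← Matrix.mul_assoc Qᵀ, hQ, Matrix.one_mul]

lemma mulVec_dotProduct_mulVec_of_orthonormal {R : Type*} [CommSemiring R] {Q : Matrix m n R}
    (hQ : Qᵀ * Q = 1) (y z : n → R) : (Q *ᵥ y) ⬝ᵥ (Q *ᵥ z) = y ⬝ᵥ z := by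
  rw [dotProduct_mulVec, ← mulVec_transpose, mulVec_mulVec, hQ, one_mulVec]

lemma dotProduct_transpose_mulVec_self_le {Q : Matrix m n ℝ} (hQ : Qᵀ * Q = 1) (x : m → ℝ) :
    (Qᵀ *ᵥ x) ⬝ᵥ (Qᵀ *ᵥ x) ≤ x ⬝ᵥ x := by
  set y := Qᵀ *ᵥ x
  have hcross : x ⬝ᵥ (Q *ᵥ y) = y ⬝ᵥ y := by rw [dotProduct_mulVec, ← mulVec_transpose]
  have hresidual : 0 ≤ (x - Q *ᵥ y) ⬝ᵥ (x - Q *ᵥ y) := dotProduct_self_star_nonneg _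
  rw [sub_dotProduct, dotProduct_sub, dotProduct_sub, dotProduct_comm (Q *ᵥ y) x, hcross,
    mulVec_dotProduct_mulVec_of_orthonormal hQ] at hresidual
  linarith

end Isometry

section MinEigenvalue

open scoped MatrixOrder

lemma smul_one_le_iff_quadratic {n : Type*} [Fintype n] [DecidableEq n] {S : Matrix n n ℝ}
    (hS : S.IsHermitian) {c : ℝ} : c • 1 ≤ S ↔ ∀ y, c * (y ⬝ᵥ y) ≤ y ⬝ᵥ (S *ᵥ y) := by
  have hsub : (S - c • 1).IsHermitian := hS.sub (isHermitian_one.smul (IsSelfAdjoint.all c))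
  simp only [le_iff, posSemidef_iff_dotProduct_mulVec, hsub, true_and, star_trivial, sub_mulVec,
    smul_mulVec, one_mulVec, dotProduct_sub, dotProduct_smul, smul_eq_mul, sub_nonneg]

section CourantFischer

variable {m n : Type*} [Fintype m] [Fintype n] [DecidableEq n] {Q : Matrix m n ℝ}
  {S : Matrix n n ℝ}

-- For `0 < c` the form bound makes `Qᵀ` injective, hence bijective, from `V` onto `n → ℝ`, so every
-- `y` is some `Qᵀ x` with `x ∈ V`, and `‖y‖ ≤ ‖x‖`.
lemma smul_one_le_of_finrank_eq (hQ : Qᵀ * Q = 1) (hS : S.PosSemidef) {c : ℝ}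
    {V : Submodule ℝ (m → ℝ)} (hV : Module.finrank ℝ V = Fintype.card n)
    (h : ∀ x ∈ V, c * (x ⬝ᵥ x) ≤ x ⬝ᵥ ((Q * S * Qᵀ) *ᵥ x)) : c • 1 ≤ S := by
  simp only [dotProduct_conj_mulVec] at h
  rcases le_or_gt c 0 with hc | hc
  · exact (smul_nonpos_of_nonpos_of_nonneg hc zero_le_one).trans hS.nonneg
  rw [smul_one_le_iff_quadratic hS.isHermitian]
  intro y
  let f : V →ₗ[ℝ] (n → ℝ) := Qᵀ.mulVecLin ∘ₗ V.subtype
  have hinj : Function.Injective f := by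
    rw [injective_iff_map_eq_zero]
    rintro ⟨x, hx⟩ (hfx : Qᵀ *ᵥ x = 0)
    have hle : c * (x ⬝ᵥ x) ≤ 0 := by simpa only [hfx, zero_dotProduct] using h x hx
    have hxx : x ⬝ᵥ x = 0 :=
      (nonpos_of_mul_nonpos_right hle hc).antisymm (dotProduct_self_star_nonneg x)
    exact Subtype.ext (dotProduct_self_eq_zero.1 hxx)
  have hsurj : Function.Surjective f :=
    (LinearMap.injective_iff_surjective_of_finrank_eq_finrank
      (by rw [hV, Module.finrank_fintype_fun_eq_card])).1 hinj
  obtain ⟨⟨x, hx⟩, rfl⟩ := hsurj y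
  exact (mul_le_mul_of_nonneg_left (dotProduct_transpose_mulVec_self_le hQ x) hc.le).trans (h x hx)

lemma exists_finrank_eq_of_smul_one_le (hQ : Qᵀ * Q = 1) (hS : S.IsHermitian) {c : ℝ}
    (h : c • 1 ≤ S) : ∃ V : Submodule ℝ (m → ℝ), Module.finrank ℝ V = Fintype.card n ∧
      ∀ x ∈ V, c * (x ⬝ᵥ x) ≤ x ⬝ᵥ ((Q * S * Qᵀ) *ᵥ x) := by
  have hinj : Function.Injective Q.mulVecLin :=
    Function.LeftInverse.injective (g := Qᵀ.mulVecLin) fun y => by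
      simp only [mulVecLin_apply, mulVec_mulVec, hQ, one_mulVec]
  refine ⟨LinearMap.range Q.mulVecLin, ?_, ?_⟩
  · rw [LinearMap.finrank_range_of_inj hinj, Module.finrank_fintype_fun_eq_card]
  · rintro _ ⟨y, rfl⟩
    rw [dotProduct_conj_mulVec, mulVecLin_apply, mulVec_dotProduct_mulVec_of_orthonormal hQ,
      mulVec_mulVec, hQ, one_mulVec]
    exact (smul_one_le_iff_quadratic hS).1 h y

end CourantFischer

lemma isGreatest_sSup_smul_one_le {n : Type*} [Finite n] [DecidableEq n] [Nonempty n]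
    {S : Matrix n n ℝ} (hS : S.PosSemidef) :
    IsGreatest {c : ℝ | c • 1 ≤ S} (sSup {c : ℝ | c • 1 ≤ S}) := by
  have := Fintype.ofFinite n
  have hset : {c : ℝ | c • 1 ≤ S} = ⋂ y, {c : ℝ | c * (y ⬝ᵥ y) ≤ y ⬝ᵥ (S *ᵥ y)} := by
    ext c
    simp only [Set.mem_iInter, Set.mem_ofPred_eq, smul_one_le_iff_quadratic hS.isHermitian]
  have hclosed : IsClosed {c : ℝ | c • 1 ≤ S} :=
    hset ▸ isClosed_iInter fun y => isClosed_le (by fun_prop) (by fun_prop)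
  have hbdd : BddAbove {c : ℝ | c • 1 ≤ S} := by
    let i : n := Classical.arbitrary n
    refine ⟨S i i, fun c hc => ?_⟩
    simpa using (le_iff.1 hc).diag_nonneg (i := i)
  exact hclosed.isGreatest_csSup ⟨0, by simpa using hS.nonneg⟩ hbdd

variable {m k : ℕ} {Q : Matrix (Fin m) (Fin k) ℝ} {S : Matrix (Fin k) (Fin k) ℝ}

lemma kthEig_conj_eq_sSup (hQ : Qᵀ * Q = 1) (hS : S.PosSemidef) :
    kthEig (Q * S * Qᵀ) k = sSup {c : ℝ | c • 1 ≤ S} := by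
  have hsq (x : Fin m → ℝ) : ∑ i, x i ^ 2 = x ⬝ᵥ x := by simp only [dotProduct, sq]
  simp only [kthEig, hsq]
  congr 1
  ext c
  exact ⟨fun ⟨_, hV, h⟩ =>
      smul_one_le_of_finrank_eq hQ hS (hV.trans (Fintype.card_fin k).symm) h,
    fun h =>
      let ⟨V, hV, hle⟩ := exists_finrank_eq_of_smul_one_le hQ hS.isHermitian h
      ⟨V, hV.trans (Fintype.card_fin k), hle⟩⟩

lemma le_kthEig_conj_iff [NeZero k] (hQ : Qᵀ * Q = 1) (hS : S.PosSemidef) {c : ℝ} :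
    c ≤ kthEig (Q * S * Qᵀ) k ↔ c • 1 ≤ S := by
  have hgreatest := isGreatest_sSup_smul_one_le hS
  rw [kthEig_conj_eq_sSup hQ hS]
  exact ⟨fun hc => (smul_le_smul_of_nonneg_right hc zero_le_one).trans hgreatest.1,
    fun hc => hgreatest.2 hc⟩

lemma mul_kthEig_add_mul_kthEig_le [NeZero k] (hQ : Qᵀ * Q = 1)
    {P T : Matrix (Fin k) (Fin k) ℝ} (hP : P.PosSemidef) (hS : S.PosSemidef) (hT : T.PosSemidef)
    {a b : ℝ} (ha : 0 ≤ a) (hb : 0 ≤ b) (h : a • P + b • S ≤ T) :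
    a * kthEig (Q * P * Qᵀ) k + b * kthEig (Q * S * Qᵀ) k ≤ kthEig (Q * T * Qᵀ) k := by
  rw [le_kthEig_conj_iff hQ hT]
  calc (a * kthEig (Q * P * Qᵀ) k + b * kthEig (Q * S * Qᵀ) k) • (1 : Matrix (Fin k) (Fin k) ℝ)
      = a • kthEig (Q * P * Qᵀ) k • 1 + b • kthEig (Q * S * Qᵀ) k • 1 := by
        rw [add_smul, mul_smul, mul_smul]
    _ ≤ a • P + b • S :=
        add_le_add (smul_le_smul_of_nonneg_left ((le_kthEig_conj_iff hQ hP).1 le_rfl) ha)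
          (smul_le_smul_of_nonneg_left ((le_kthEig_conj_iff hQ hS).1 le_rfl) hb)
    _ ≤ T := h

end MinEigenvalue

section ScaledGD

/-- One ScaledGD step, of size `η`, for the symmetric factorization `A ≈ X * Xᵀ`. The inverse is
`Matrix.inv`, so the step fixes `X` when `Xᵀ * X` is singular. -/
noncomputable def scaledGDStep {R m n : Type*} [CommRing R] [Fintype m] [Fintype n] [DecidableEq n]
    (η : R) (A : Matrix m m R) (X : Matrix m n R) : Matrix m n R :=
  X - η • ((X * Xᵀ - A) * X * (Xᵀ * X)⁻¹)

section Algebra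

variable {R m n : Type*} [CommRing R] [Fintype m] [Fintype n] [DecidableEq n] (η : R)

lemma scaledGDStep_conj_mul {Q : Matrix m n R} (hQ : Qᵀ * Q = 1) (S Φ : Matrix n n R) :
    scaledGDStep η (Q * S * Qᵀ) (Q * Φ) = Q * scaledGDStep η S Φ := by
  have hresidual : (Q * Φ * (Q * Φ)ᵀ - Q * S * Qᵀ) * (Q * Φ) = Q * ((Φ * Φᵀ - S) * Φ) := by
    calc (Q * Φ * (Q * Φ)ᵀ - Q * S * Qᵀ) * (Q * Φ)
        = Q * (Φ * Φᵀ - S) * (Qᵀ * Q) * Φ := by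
          simp only [transpose_mul, Matrix.mul_sub, Matrix.sub_mul, Matrix.mul_assoc]
      _ = Q * ((Φ * Φᵀ - S) * Φ) := by rw [hQ, Matrix.mul_one, Matrix.mul_assoc]
  rw [scaledGDStep, scaledGDStep, hresidual, transpose_mul_self_of_orthonormal hQ,
    Matrix.mul_assoc Q, ← Matrix.mul_smul, ← Matrix.mul_sub]

lemma eq_mul_iterate_scaledGDStep {Q : Matrix m n R} (hQ : Qᵀ * Q = 1) {S Φ : Matrix n n R}
    {X : ℕ → Matrix m n R} (hX0 : X 0 = Q * Φ)
    (hX : ∀ t, X (t + 1) = scaledGDStep η (Q * S * Qᵀ) (X t)) (t : ℕ) :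
    X t = Q * (scaledGDStep η S)^[t] Φ := by
  induction t with
  | zero => exact hX0
  | succ t ih => rw [hX, ih, scaledGDStep_conj_mul η hQ, Function.iterate_succ_apply']

lemma scaledGDStep_of_isUnit (S : Matrix n n R) {Φ : Matrix n n R} (hΦ : IsUnit Φ) :
    scaledGDStep η S Φ = (1 - η) • Φ + η • (S * Φ⁻¹ᵀ) := by
  have hdet : IsUnit Φ.det := (isUnit_iff_isUnit_det Φ).1 hΦ
  have hdetT : IsUnit Φᵀ.det := isUnit_det_transpose Φ hdet
  rw [scaledGDStep, Matrix.mul_inv_rev, ← Matrix.mul_assoc, mul_nonsing_inv_cancel_right _ _ hdet,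
    Matrix.sub_mul, mul_nonsing_inv_cancel_right _ _ hdetT, ← transpose_nonsing_inv]
  module

lemma scaledGDStep_mul_transpose {S Φ : Matrix n n R} (hS : S.IsSymm) (hΦ : IsUnit Φ) :
    scaledGDStep η S Φ * (scaledGDStep η S Φ)ᵀ =
      (1 - η) ^ 2 • (Φ * Φᵀ) + (2 * η * (1 - η)) • S + η ^ 2 • (S * (Φ * Φᵀ)⁻¹ * S) := by
  have hdet : IsUnit Φ.det := (isUnit_iff_isUnit_det Φ).1 hΦ
  have hleft : Φ * (Φ⁻¹ * S) = S := mul_nonsing_inv_cancel_left _ _ hdet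
  have hright : S * Φ⁻¹ᵀ * Φᵀ = S := by
    rw [Matrix.mul_assoc, ← transpose_mul, mul_nonsing_inv _ hdet, transpose_one, Matrix.mul_one]
  have hinv : S * Φ⁻¹ᵀ * (Φ⁻¹ * S) = S * (Φ * Φᵀ)⁻¹ * S := by
    rw [Matrix.mul_inv_rev, ← transpose_nonsing_inv]
    simp only [Matrix.mul_assoc]
  rw [scaledGDStep_of_isUnit η S hΦ]
  simp only [transpose_add, transpose_smul, transpose_mul, transpose_transpose, hS.eq,
    Matrix.add_mul, Matrix.mul_add, Matrix.smul_mul, Matrix.mul_smul, hleft, hright, hinv]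
  module

end Algebra

open scoped MatrixOrder

lemma posSemidef_self_mul_transpose {m n : Type*} [Finite m] [Fintype n] (X : Matrix m n ℝ) :
    (X * Xᵀ).PosSemidef :=
  have := Fintype.ofFinite m
  posSemidef_self_mul_conjTranspose X

variable {n : Type*} [Fintype n] [DecidableEq n] {η : ℝ} {S Φ : Matrix n n ℝ}

lemma posSemidef_mul_inv_self_mul_transpose_mul (hS : S.IsSymm) (Φ : Matrix n n ℝ) :
    (S * (Φ * Φᵀ)⁻¹ * S).PosSemidef := by
  simpa only [conjTranspose_eq_transpose_of_trivial, hS.eq] using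
    (posSemidef_self_mul_transpose Φ).inv.mul_mul_conjTranspose_same S

lemma isUnit_scaledGDStep (hS : S.PosDef) (hη0 : 0 < η) (hη1 : η ≤ 1) (hΦ : IsUnit Φ) :
    IsUnit (scaledGDStep η S Φ) := by
  have hSymm : S.IsSymm := isHermitian_iff_isSymm.1 hS.isHermitian
  have hquad : (S * (Φ * Φᵀ)⁻¹ * S).PosDef := by
    rw [(posSemidef_mul_inv_self_mul_transpose_mul hSymm Φ).posDef_iff_isUnit]
    have hgramUnit : IsUnit (Φ * Φᵀ)⁻¹ :=
      isUnit_nonsing_inv_iff.2 (hΦ.mul ((isUnit_transpose Φ).2 hΦ))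
    exact (hS.isUnit.mul hgramUnit).mul hS.isUnit
  have hgram : (scaledGDStep η S Φ * (scaledGDStep η S Φ)ᵀ).PosDef := by
    rw [scaledGDStep_mul_transpose η hSymm hΦ]
    have hcross : 0 ≤ 2 * η * (1 - η) := mul_nonneg (by positivity) (sub_nonneg.2 hη1)
    exact PosDef.posSemidef_add
      (((posSemidef_self_mul_transpose Φ).smul (sq_nonneg _)).add (hS.posSemidef.smul hcross))
      (hquad.smul (by positivity))
  exact isUnit_of_mul_isUnit_left hgram.isUnit

lemma le_scaledGDStep_mul_transpose (hS : S.IsSymm) (hΦ : IsUnit Φ) :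
    (1 - η) ^ 2 • (Φ * Φᵀ) + (2 * η * (1 - η)) • S ≤
      scaledGDStep η S Φ * (scaledGDStep η S Φ)ᵀ := by
  rw [scaledGDStep_mul_transpose η hS hΦ]
  exact le_add_of_nonneg_right
    (smul_nonneg (sq_nonneg η) (posSemidef_mul_inv_self_mul_transpose_mul hS Φ).nonneg)

lemma isUnit_iterate_scaledGDStep (hS : S.PosDef) (hη0 : 0 < η) (hη1 : η ≤ 1) (hΦ : IsUnit Φ)
    (t : ℕ) : IsUnit ((scaledGDStep η S)^[t] Φ) := by
  induction t with
  | zero => exact hΦ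
  | succ t ih =>
    rw [Function.iterate_succ_apply']
    exact isUnit_scaledGDStep hS hη0 hη1 ih

lemma le_iterate_scaledGDStep_mul_transpose (hS : S.PosDef) (hη0 : 0 < η) (hη1 : η ≤ 1)
    (hΦ : IsUnit Φ) (t : ℕ) :
    (1 - η) ^ (2 * t) • (Φ * Φᵀ) + ((1 - η) - (1 - η) ^ (2 * t + 1)) • S ≤
      (scaledGDStep η S)^[t] Φ * ((scaledGDStep η S)^[t] Φ)ᵀ := by
  induction t with
  | zero => simp
  | succ t ih =>
    rw [Function.iterate_succ_apply']
    set Ψ := (scaledGDStep η S)^[t] Φ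
    have hΨ : IsUnit Ψ := isUnit_iterate_scaledGDStep hS hη0 hη1 hΦ t
    have hslack : 0 ≤ (η ^ 2 * (1 - η)) • S :=
      smul_nonneg (mul_nonneg (sq_nonneg η) (sub_nonneg.2 hη1)) hS.posSemidef.nonneg
    calc (1 - η) ^ (2 * (t + 1)) • (Φ * Φᵀ) + ((1 - η) - (1 - η) ^ (2 * (t + 1) + 1)) • S
        ≤ (1 - η) ^ (2 * (t + 1)) • (Φ * Φᵀ) + ((1 - η) - (1 - η) ^ (2 * (t + 1) + 1)) • S
          + (η ^ 2 * (1 - η)) • S := le_add_of_nonneg_right hslack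
      _ = (1 - η) ^ 2 • ((1 - η) ^ (2 * t) • (Φ * Φᵀ) + ((1 - η) - (1 - η) ^ (2 * t + 1)) • S)
          + (2 * η * (1 - η)) • S := by module
      _ ≤ (1 - η) ^ 2 • (Ψ * Ψᵀ) + (2 * η * (1 - η)) • S :=
          add_le_add_left (smul_le_smul_of_nonneg_left ih (sq_nonneg _)) _
      _ ≤ scaledGDStep η S Ψ * (scaledGDStep η S Ψ)ᵀ :=
          le_scaledGDStep_mul_transpose (isHermitian_iff_isSymm.1 hS.isHermitian) hΨ

end ScaledGD

/-- Implicit regularization of ScaledGD with Nyström initialization in the symmetric,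
exact-parametrized setting: the iterates stay aligned with the column space of `A`
(via an invertible `Φ_t`), the preconditioner is invertible, and the smallest (i.e. `r`-th
largest) eigenvalue of `X_{t+1} X_{t+1}ᵀ` satisfies the stated lower bound. -/
theorem stmt_0
    (m r : ℕ) (hr : 0 < r)
    (A : Matrix (Fin m) (Fin m) ℝ)
    (Q : Matrix (Fin m) (Fin r) ℝ) (d : Fin r → ℝ)
    (hQ : Qᵀ * Q = 1)
    (hd : ∀ i, 0 < d i)
    (hdmono : ∀ i j : Fin r, i ≤ j → d j ≤ d i)
    (hA : A = Q * Matrix.diagonal d * Qᵀ)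
    (η : ℝ) (hη0 : 0 < η) (hη1 : η ≤ 1)
    (Ω : Matrix (Fin m) (Fin r) ℝ)
    (X : ℕ → Matrix (Fin m) (Fin r) ℝ)
    (hX0 : X 0 = A * Ω)
    (hrank : (X 0).rank = r)
    (hrec : ∀ t : ℕ,
      X (t + 1) = X t - η • ((X t * (X t)ᵀ - A) * X t * ((X t)ᵀ * X t)⁻¹)) :
    (∀ t : ℕ, ∃ Φ : Matrix (Fin r) (Fin r) ℝ,
        IsUnit Φ ∧ X t = Q * Φ ∧ IsUnit ((X t)ᵀ * X t)) ∧
    (∀ t : ℕ,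
      (1 - η) ^ (2 * t + 2) * kthEig (X 0 * (X 0)ᵀ) r
          + (1 - η) * kthEig A r - (1 - η) ^ (2 * t + 3) * kthEig A r
        ≤ kthEig (X (t + 1) * (X (t + 1))ᵀ) r) := by
  have : NeZero r := ⟨hr.ne'⟩
  subst hA
  have hS : (diagonal d).PosDef := .diagonal hd
  set Φ₀ := diagonal d * Qᵀ * Ω with hΦ₀_def
  have hX0Φ : X 0 = Q * Φ₀ := by simp only [hX0, hΦ₀_def, Matrix.mul_assoc]
  have hΦ₀ : IsUnit Φ₀ := isUnit_of_rank_mul_eq_card (by rw [← hX0Φ, hrank, Fintype.card_fin])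
  let Φ (t : ℕ) := (scaledGDStep η (diagonal d))^[t] Φ₀
  have hX (t : ℕ) : X t = Q * Φ t := eq_mul_iterate_scaledGDStep η hQ hX0Φ hrec t
  have hΦ (t : ℕ) : IsUnit (Φ t) := isUnit_iterate_scaledGDStep hS hη0 hη1 hΦ₀ t
  have hXX (t : ℕ) : X t * (X t)ᵀ = Q * (Φ t * (Φ t)ᵀ) * Qᵀ := by
    simp only [hX, transpose_mul, Matrix.mul_assoc]
  refine ⟨fun t => ⟨Φ t, hΦ t, hX t, ?_⟩, fun t => ?_⟩
  · rw [hX, transpose_mul_self_of_orthonormal hQ]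
    exact ((isUnit_transpose _).2 (hΦ t)).mul (hΦ t)
  · rw [hXX, hXX, add_sub_assoc, ← sub_mul]
    have h1η : 0 ≤ 1 - η := sub_nonneg.2 hη1
    exact mul_kthEig_add_mul_kthEig_le hQ (posSemidef_self_mul_transpose _) hS.posSemidef
      (posSemidef_self_mul_transpose _) (pow_nonneg h1η _)
      (sub_nonneg.2 (pow_le_of_le_one h1η (by linarith) (by omega)))
      (le_iterate_scaledGDStep_mul_transpose hS hη0 hη1 hΦ₀ (t + 1))
end

section
/- Let Σ ∈ R^{r×r} be diagonal with positive diagonal entries σ_1 ≥ ⋯ ≥ σ_r > 0, and let B ∈ R^{r×r} be symmetric positive definite with smallest eigenvalue λ_min(B) ≥ σ_r/3. Define B' = (1/4) B + (1/2) Σ + (1/4) Σ B⁻¹ Σ (one ScaledGD step with η = 1/2 in the reduced coordinates). Then ‖B' − Σ‖_F ≤ (3 σ_1 / (4 σ_r²)) ‖B − Σ‖_F². -/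
open Matrix BigOperators

/-- The smallest eigenvalue of a real symmetric matrix, via the Rayleigh quotient
characterization. -/
noncomputable def lamMin {n : ℕ} (M : Matrix (Fin n) (Fin n) ℝ) : ℝ :=
  sSup {c : ℝ | ∀ x : Fin n → ℝ, c * (∑ i, x i ^ 2) ≤ ∑ i, x i * (M *ᵥ x) i}

/-- The Frobenius norm of a real matrix. -/
noncomputable def frobNorm {m n : ℕ} (M : Matrix (Fin m) (Fin n) ℝ) : ℝ :=
  Real.sqrt (∑ i, ∑ j, (M i j) ^ 2)

/-!
For invertible `B` the update completes a square, `B' - Σ = ¼ (B - Σ) B⁻¹ (B - Σ)`, so it is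
quadratic in the error `E = B - Σ`. If `⟨x, B x⟩ ≥ a ‖x‖²` for all `x` with `a > 0`, expanding
`‖B x - a x‖² ≥ 0` gives `a ‖x‖ ≤ ‖B x‖`; applied to the columns of `B⁻¹ E` this yields
`‖B⁻¹ E‖_F ≤ ‖E‖_F / a`, hence `‖B' - Σ‖_F ≤ ‖E‖_F² / (4 a)`. With `a = σ_r / 3` the constant is
`3 / (4 σ_r) ≤ 3 σ_1 / (4 σ_r²)`.
-/

section Coercivity

variable {n : Type*} [Fintype n]

/-- The inequality `a ‖x‖² ≤ ⟨x, M x⟩` for all `x`, in the Euclidean inner product: every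
Rayleigh quotient of `M` is at least `a`. -/
def IsRayleighLowerBound (M : Matrix n n ℝ) (a : ℝ) : Prop :=
  ∀ x : n → ℝ, a * (x ⬝ᵥ x) ≤ x ⬝ᵥ M *ᵥ x

lemma isRayleighLowerBound_of_le_lamMin {n : ℕ} {M : Matrix (Fin n) (Fin n) ℝ} {a : ℝ}
    (ha : 0 < a) (h : a ≤ lamMin M) : IsRayleighLowerBound M a := by
  have lamMin_eq : lamMin M = sSup {c | IsRayleighLowerBound M c} := by
    simp only [lamMin, IsRayleighLowerBound, dotProduct, sq]
  rw [lamMin_eq] at h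
  have bounds_nonempty : {c | IsRayleighLowerBound M c}.Nonempty := by
    -- With no admissible `c`, the supremum defining `lamMin M` takes the junk value `0`.
    rw [Set.nonempty_iff_ne_empty]
    intro h_empty
    rw [h_empty, Real.sSup_empty] at h
    exact h.not_gt ha
  intro x
  rcases eq_or_ne x 0 with rfl | hx
  · simp
  · have norm_sq_pos : 0 < x ⬝ᵥ x := by
      simpa using dotProduct_star_self_pos_iff.2 hx
    rw [← le_div_iff₀ norm_sq_pos]
    exact h.trans (csSup_le bounds_nonempty fun c hc => (le_div_iff₀ norm_sq_pos).2 (hc x))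

namespace IsRayleighLowerBound

variable {M : Matrix n n ℝ} {a : ℝ}

lemma sq_mul_dotProduct_self_le (h : IsRayleighLowerBound M a) (ha : 0 ≤ a) (x : n → ℝ) :
    a ^ 2 * (x ⬝ᵥ x) ≤ M *ᵥ x ⬝ᵥ M *ᵥ x := by
  have residual_nonneg : 0 ≤ (M *ᵥ x - a • x) ⬝ᵥ (M *ᵥ x - a • x) := by
    simpa using dotProduct_star_self_nonneg (M *ᵥ x - a • x)
  have residual_expansion : (M *ᵥ x - a • x) ⬝ᵥ (M *ᵥ x - a • x) =
      M *ᵥ x ⬝ᵥ M *ᵥ x - 2 * a * (x ⬝ᵥ M *ᵥ x) + a ^ 2 * (x ⬝ᵥ x) := by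
    simp only [sub_dotProduct, dotProduct_sub, smul_dotProduct, dotProduct_smul, smul_eq_mul,
      dotProduct_comm (M *ᵥ x) x]
    ring
  linarith [mul_le_mul_of_nonneg_left (h x) ha]

lemma isUnit [DecidableEq n] (h : IsRayleighLowerBound M a) (ha : 0 < a) : IsUnit M := by
  rw [← mulVec_injective_iff_isUnit]
  refine (injective_iff_map_eq_zero M.mulVecLin).2 fun x hx => ?_
  have hMx : M *ᵥ x = 0 := hx
  have norm_sq_nonpos : a * (x ⬝ᵥ x) ≤ 0 := by simpa [hMx] using h x
  have norm_sq_nonneg : 0 ≤ x ⬝ᵥ x := by simpa using dotProduct_star_self_nonneg x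
  exact dotProduct_self_eq_zero.1 ((nonpos_of_mul_nonpos_right norm_sq_nonpos ha).antisymm
    norm_sq_nonneg)

end IsRayleighLowerBound

end Coercivity

section Frobenius

open scoped Matrix.Norms.Frobenius

variable {n m : Type*} [Fintype n] [Fintype m]

lemma frobenius_norm_eq_sqrt (X : Matrix n m ℝ) : ‖X‖ = √(∑ i, ∑ j, X i j ^ 2) := by
  simp [frobenius_norm_def, Real.sqrt_eq_rpow]

lemma frobNorm_eq_norm {k l : ℕ} (X : Matrix (Fin k) (Fin l) ℝ) : frobNorm X = ‖X‖ :=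
  (frobenius_norm_eq_sqrt X).symm

lemma frobenius_norm_sq_eq_sum_dotProduct_col (X : Matrix n m ℝ) :
    ‖X‖ ^ 2 = ∑ j, X.col j ⬝ᵥ X.col j := by
  rw [frobenius_norm_eq_sqrt, Real.sq_sqrt (by positivity), Finset.sum_comm]
  simp only [dotProduct, col_apply, sq]

namespace IsRayleighLowerBound

variable {M : Matrix n n ℝ} {a : ℝ}

lemma mul_frobenius_norm_le (h : IsRayleighLowerBound M a) (ha : 0 ≤ a) (X : Matrix n m ℝ) :
    a * ‖X‖ ≤ ‖M * X‖ := by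
  refine le_of_sq_le_sq ?_ (norm_nonneg _)
  rw [mul_pow, frobenius_norm_sq_eq_sum_dotProduct_col, frobenius_norm_sq_eq_sum_dotProduct_col,
    Finset.mul_sum]
  exact Finset.sum_le_sum fun j _ => h.sq_mul_dotProduct_self_le ha (X.col j)

lemma frobenius_norm_inv_mul_le [DecidableEq n] (h : IsRayleighLowerBound M a) (ha : 0 < a)
    (X : Matrix n m ℝ) : ‖M⁻¹ * X‖ ≤ ‖X‖ / a := by
  have hdet : IsUnit M.det := (isUnit_iff_isUnit_det M).1 (h.isUnit ha)
  rw [le_div_iff₀' ha]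
  simpa only [mul_nonsing_inv_cancel_left M X hdet] using h.mul_frobenius_norm_le ha.le (M⁻¹ * X)

end IsRayleighLowerBound

end Frobenius

section ScaledGD

variable {n : Type*} [Fintype n] [DecidableEq n]

lemma sub_mul_inv_mul_sub {R : Type*} [CommRing R] {B : Matrix n n R} (hB : IsUnit B)
    (S : Matrix n n R) : (B - S) * (B⁻¹ * (B - S)) = B - 2 • S + S * B⁻¹ * S := by
  have hdet : IsUnit B.det := (isUnit_iff_isUnit_det B).1 hB
  rw [Matrix.mul_sub B⁻¹, nonsing_inv_mul B hdet, Matrix.sub_mul, Matrix.mul_sub, Matrix.mul_sub,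
    mul_nonsing_inv_cancel_left B S hdet, ← Matrix.mul_assoc, mul_one, mul_one]
  abel

/-- The ScaledGD update with step size `η = 1/2` in the reduced coordinates `B`, where the
target is `S` (the `Σ` of the paper). -/
noncomputable def scaledGDHalfStep (S B : Matrix n n ℝ) : Matrix n n ℝ :=
  (1 / 4 : ℝ) • B + (1 / 2 : ℝ) • S + (1 / 4 : ℝ) • (S * B⁻¹ * S)

lemma scaledGDHalfStep_sub {B : Matrix n n ℝ} (hB : IsUnit B) (S : Matrix n n ℝ) :
    scaledGDHalfStep S B - S = (1 / 4 : ℝ) • ((B - S) * (B⁻¹ * (B - S))) := by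
  rw [sub_mul_inv_mul_sub hB, scaledGDHalfStep]
  module

open scoped Matrix.Norms.Frobenius in
lemma IsRayleighLowerBound.frobenius_norm_scaledGDHalfStep_sub_le {B : Matrix n n ℝ} {a : ℝ}
    (h : IsRayleighLowerBound B a) (ha : 0 < a) (S : Matrix n n ℝ) :
    ‖scaledGDHalfStep S B - S‖ ≤ 1 / (4 * a) * ‖B - S‖ ^ 2 := by
  calc ‖scaledGDHalfStep S B - S‖
      = 1 / 4 * ‖(B - S) * (B⁻¹ * (B - S))‖ := by
        rw [scaledGDHalfStep_sub (h.isUnit ha), norm_smul]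
        norm_num
    _ ≤ 1 / 4 * (‖B - S‖ * ‖B⁻¹ * (B - S)‖) := by
        gcongr
        exact frobenius_norm_mul _ _
    _ ≤ 1 / 4 * (‖B - S‖ * (‖B - S‖ / a)) := by
        gcongr
        exact h.frobenius_norm_inv_mul_le ha _
    _ = 1 / (4 * a) * ‖B - S‖ ^ 2 := by
        field_simp

end ScaledGD

lemma one_div_four_mul_third_le {s t : ℝ} (hs : 0 < s) (hst : s ≤ t) :
    1 / (4 * (s / 3)) ≤ 3 * t / (4 * s ^ 2) := by
  calc 1 / (4 * (s / 3)) = 3 * s / (4 * s ^ 2) := by field_simp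
    _ ≤ 3 * t / (4 * s ^ 2) := by gcongr

theorem stmt_2_general {r : ℕ} {B : Matrix (Fin r) (Fin r) ℝ} {a : ℝ} (ha : 0 < a)
    (hB : a ≤ lamMin B) (S : Matrix (Fin r) (Fin r) ℝ) :
    frobNorm (scaledGDHalfStep S B - S) ≤ 1 / (4 * a) * frobNorm (B - S) ^ 2 := by
  simpa only [frobNorm_eq_norm] using
    (isRayleighLowerBound_of_le_lamMin ha hB).frobenius_norm_scaledGDHalfStep_sub_le ha S

/-- One-step quadratic contraction underlying Phase 2 of ScaledGD (step size `η = 1/2`)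
in reduced coordinates: for `Σ = diag(σ_1 ≥ ⋯ ≥ σ_r > 0)` and a symmetric positive
definite `B` with `λ_min(B) ≥ σ_r/3`, the matrix `B' = (1/4)B + (1/2)Σ + (1/4)ΣB⁻¹Σ`
satisfies `‖B' − Σ‖_F ≤ (3σ_1/(4σ_r²)) ‖B − Σ‖_F²`. -/
theorem stmt_2
    (r : ℕ) (hr : 0 < r)
    (d : Fin r → ℝ)
    (hd : ∀ i, 0 < d i)
    (hdmono : ∀ i j : Fin r, i ≤ j → d j ≤ d i)
    (B : Matrix (Fin r) (Fin r) ℝ)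
    (hB : B.PosDef)
    (hlam : d ⟨r - 1, Nat.sub_lt hr Nat.one_pos⟩ / 3 ≤ lamMin B)
    (B' : Matrix (Fin r) (Fin r) ℝ)
    (hB' : B' = (1 / 4 : ℝ) • B + (1 / 2 : ℝ) • Matrix.diagonal d
        + (1 / 4 : ℝ) • (Matrix.diagonal d * B⁻¹ * Matrix.diagonal d)) :
    frobNorm (B' - Matrix.diagonal d)
      ≤ 3 * d ⟨0, hr⟩ / (4 * d ⟨r - 1, Nat.sub_lt hr Nat.one_pos⟩ ^ 2)
          * frobNorm (B - Matrix.diagonal d) ^ 2 := by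
  subst hB'
  refine (stmt_2_general (div_pos (hd _) three_pos) hlam (diagonal d)).trans ?_
  exact mul_le_mul_of_nonneg_right
    (one_div_four_mul_third_le (hd _) (hdmono _ _ (Fin.mk_le_mk.2 (Nat.zero_le _)))) (sq_nonneg _)
end

section
/- Let r ≤ r_A. If X* ∈ R^{m×r} is a global minimizer of the function X ↦ ‖XXᵀ − A‖_F² over R^{m×r}, then X* is weakly optimal, i.e., (X*)ᵀ A† X* = I_r, where A† = Q Σ⁻¹ Qᵀ is the Moore–Penrose pseudoinverse of A. -/
open Matrix BigOperators

/-!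
Write `E = XXᵀ - A`. At a local minimizer, varying `X` in the direction `EX` gives `EX = 0`, i.e.
`AX = X(XᵀX)`. If `Xv = 0` with `v ≠ 0`, then the first-order variation of `XXᵀ` along `uvᵀ`
vanishes, and the second-order condition reads `‖v‖² uᵀEu ≥ 0` for all `u`. Hence `A ≤ XXᵀ` and
`rank A ≤ rank X < r`, which is excluded, so `G = XᵀX` is invertible. For every `P` with
`APA = A` we get `G(XᵀPX)G = XᵀAPAX = XᵀAX = G²`, and cancelling `G` on both sides
gives `XᵀPX = 1`.
-/

section LocalMin

variable {a : ℝ} {g : ℝ → ℝ}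

theorem eq_zero_of_isLocalMin_const_add_mul (hg : ContinuousAt g 0)
    (hmin : IsLocalMin (fun t => a + t * g t) 0) : g 0 = 0 := by
  refine hmin.hasDerivAt_eq_zero (hasDerivAt_iff_tendsto_slope_zero.2 ?_)
  refine (hg.tendsto.mono_left nhdsWithin_le_nhds).congr' ?_
  filter_upwards [self_mem_nhdsWithin] with t ht
  simp [inv_mul_cancel_left₀ (show t ≠ 0 from ht)]

theorem nonneg_of_isLocalMin_const_add_sq_mul (hg : ContinuousAt g 0)
    (hmin : IsLocalMin (fun t => a + t ^ 2 * g t) 0) : 0 ≤ g 0 := by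
  refine ge_of_tendsto (hg.tendsto.mono_left (nhdsWithin_le_nhds (s := {0}ᶜ))) ?_
  filter_upwards [self_mem_nhdsWithin, hmin.filter_mono nhdsWithin_le_nhds] with t ht hle
  have hle' : 0 ≤ t ^ 2 * g t := by simpa using hle
  exact nonneg_of_mul_nonneg_right hle' (sq_pos_of_ne_zero ht)

end LocalMin

section LinearAlgebra

variable {n κ : Type*} [Fintype n] [Fintype κ]

theorem rank_le_rank_of_ker_mulVecLin_le {K m p : Type*} [Field K]
    {A : Matrix m n K} {B : Matrix p n K}
    (h : LinearMap.ker B.mulVecLin ≤ LinearMap.ker A.mulVecLin) : A.rank ≤ B.rank := by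
  have hA := A.mulVecLin.finrank_range_add_finrank_ker
  have hB := B.mulVecLin.finrank_range_add_finrank_ker
  have hker := Submodule.finrank_mono h
  unfold Matrix.rank
  omega

open scoped ComplexOrder in
theorem rank_le_rank_of_posSemidef_sub {𝕜 : Type*} [RCLike 𝕜] {A B : Matrix n n 𝕜}
    (hA : A.PosSemidef) (hBA : (B - A).PosSemidef) : A.rank ≤ B.rank := by
  refine rank_le_rank_of_ker_mulVecLin_le fun v hv => ?_
  simp only [LinearMap.mem_ker, mulVecLin_apply] at hv ⊢
  have hle : star v ⬝ᵥ A *ᵥ v ≤ 0 := by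
    simpa [sub_mulVec, hv] using hBA.dotProduct_mulVec_nonneg v
  exact (hA.dotProduct_mulVec_zero_iff v).1 (hle.antisymm (hA.dotProduct_mulVec_nonneg v))

theorem mulVec_injective_iff_card_le_rank {K m : Type*} [Field K] {X : Matrix m κ K} :
    Function.Injective X.mulVec ↔ Fintype.card κ ≤ X.rank := by
  rw [mulVec_injective_iff, linearIndependent_iff_card_le_finrank_span, rank_eq_finrank_span_cols,
    Set.finrank]

theorem isUnit_transpose_mul_self_of_card_le_rank {K : Type*} [Field K] [LinearOrder K]
    [IsStrictOrderedRing K] [DecidableEq κ] {X : Matrix n κ K} (h : Fintype.card κ ≤ X.rank) :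
    IsUnit (Xᵀ * X) := by
  rw [← mulVec_injective_iff_isUnit, mulVec_injective_iff_card_le_rank, rank_transpose_mul_self]
  exact h

theorem transpose_mul_generalizedInverse_mul_eq_one {R : Type*} [CommRing R] [DecidableEq κ]
    {A P : Matrix n n R} {X : Matrix n κ R} (hA : A.IsSymm) (hP : A * P * A = A)
    (hAX : A * X = X * (Xᵀ * X)) (hX : IsUnit (Xᵀ * X)) : Xᵀ * P * X = 1 := by
  have hXA : Xᵀ * A = Xᵀ * X * Xᵀ := by
    simpa [hA.eq, Matrix.mul_assoc] using congrArg transpose hAX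
  refine hX.mul_left_cancel (hX.mul_right_cancel ?_)
  calc Xᵀ * X * (Xᵀ * P * X) * (Xᵀ * X) = Xᵀ * X * Xᵀ * P * (X * (Xᵀ * X)) := by
        simp only [Matrix.mul_assoc]
    _ = Xᵀ * (A * P * A) * X := by rw [← hXA, ← hAX]; simp only [Matrix.mul_assoc]
    _ = Xᵀ * X * 1 * (Xᵀ * X) := by
        rw [hP, Matrix.mul_assoc, hAX, Matrix.mul_one, Matrix.mul_assoc]

end LinearAlgebra

section Expansion

variable {R n κ : Type*} [CommRing R] [Fintype κ]

theorem isSymm_mul_transpose_sub {A : Matrix n n R} (hA : A.IsSymm) (X : Matrix n κ R) :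
    (X * Xᵀ - A).IsSymm := by
  rw [IsSymm, transpose_sub, transpose_mul, transpose_transpose, hA.eq]

theorem add_smul_mul_transpose_sub (A : Matrix n n R) (X H : Matrix n κ R) (t : R) :
    (X + t • H) * (X + t • H)ᵀ - A =
      (X * Xᵀ - A) + t • (H * Xᵀ + X * Hᵀ) + t ^ 2 • (H * Hᵀ) := by
  simp only [transpose_add, transpose_smul, Matrix.add_mul, Matrix.mul_add, Matrix.smul_mul,
    Matrix.mul_smul, smul_add, smul_smul, pow_two]
  abel

-- Horner form in `t`: it reads `a + t * g t` in general and `a + t ^ 2 * g t` when `S = 0`.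
theorem trace_transpose_mul_self_add_smul_add_smul [Fintype n] (E S K : Matrix n κ R) (t : R) :
    trace ((E + t • S + t ^ 2 • K)ᵀ * (E + t • S + t ^ 2 • K)) =
      trace (Eᵀ * E) + t * (2 * trace (Eᵀ * S) + t * (trace (Sᵀ * S) + 2 * trace (Eᵀ * K) +
        t * (2 * trace (Sᵀ * K) + t * trace (Kᵀ * K)))) := by
  have trace_comm (M N : Matrix n κ R) : trace (Mᵀ * N) = trace (Nᵀ * M) := by
    rw [← trace_transpose, transpose_mul, transpose_transpose]
  simp only [transpose_add, transpose_smul, Matrix.add_mul, Matrix.mul_add, Matrix.smul_mul,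
    Matrix.mul_smul, trace_add, trace_smul, smul_eq_mul, trace_comm S E, trace_comm K E,
    trace_comm K S]
  ring

theorem trace_mul_mul_transpose_add [Fintype n] {E : Matrix n n R} (hE : E.IsSymm)
    (X H : Matrix n κ R) : trace (E * (H * Xᵀ + X * Hᵀ)) = 2 * trace (Hᵀ * E * X) := by
  have h₁ : trace (E * (X * Hᵀ)) = trace (Hᵀ * E * X) := by
    rw [← Matrix.mul_assoc, trace_mul_comm, Matrix.mul_assoc]
  have h₂ : trace (E * (H * Xᵀ)) = trace (E * (X * Hᵀ)) := by
    rw [← trace_transpose, transpose_mul, transpose_mul, transpose_transpose, hE.eq,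
      trace_mul_comm]
  rw [Matrix.mul_add, trace_add, h₂, h₁, two_mul]

end Expansion

section FactorLoss

variable {n κ : Type*} [Fintype n] [Fintype κ]

/-- The squared Frobenius error `‖XXᵀ - A‖_F²` of the symmetric factorization `XXᵀ` of `A`,
encoded as `tr (EᵀE)` with `E = XXᵀ - A` so that it can be expanded by matrix algebra. -/
def factorLoss (A : Matrix n n ℝ) (X : Matrix n κ ℝ) : ℝ :=
  trace ((X * Xᵀ - A)ᵀ * (X * Xᵀ - A))

variable {A : Matrix n n ℝ} {X : Matrix n κ ℝ}

theorem isLocalMin_factorLoss_add_smul (hmin : IsLocalMin (factorLoss A) X)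
    (H : Matrix n κ ℝ) : IsLocalMin (fun t : ℝ => factorLoss A (X + t • H)) 0 :=
  IsLocalMin.comp_continuous (f := factorLoss A) (g := fun t : ℝ => X + t • H)
    (by simpa using hmin) (by fun_prop)

theorem mul_eq_zero_of_isLocalMin_factorLoss (hA : A.IsSymm)
    (hmin : IsLocalMin (factorLoss A) X) : (X * Xᵀ - A) * X = 0 := by
  have hE : (X * Xᵀ - A).IsSymm := isSymm_mul_transpose_sub hA X
  have hline := isLocalMin_factorLoss_add_smul hmin ((X * Xᵀ - A) * X)
  simp only [factorLoss, add_smul_mul_transpose_sub,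
    trace_transpose_mul_self_add_smul_add_smul] at hline
  have hderiv := eq_zero_of_isLocalMin_const_add_mul (by fun_prop) hline
  rw [zero_mul, add_zero, hE.eq, trace_mul_mul_transpose_add hE, transpose_mul, hE.eq] at hderiv
  rw [← trace_conjTranspose_mul_self_eq_zero_iff, conjTranspose_eq_transpose_of_trivial,
    transpose_mul, hE.eq, ← Matrix.mul_assoc]
  linarith

theorem trace_nonneg_of_isLocalMin_factorLoss (hA : A.IsSymm)
    (hmin : IsLocalMin (factorLoss A) X) {H : Matrix n κ ℝ} (hXH : X * Hᵀ = 0) :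
    0 ≤ trace ((X * Xᵀ - A) * (H * Hᵀ)) := by
  have hHX : H * Xᵀ = 0 := by simpa using congrArg transpose hXH
  have hline := isLocalMin_factorLoss_add_smul hmin H
  simp only [factorLoss, add_smul_mul_transpose_sub,
    trace_transpose_mul_self_add_smul_add_smul, hXH, hHX, (isSymm_mul_transpose_sub hA X).eq,
    add_zero, transpose_zero, Matrix.zero_mul, trace_zero, mul_zero, zero_add,
    ← mul_assoc, ← pow_two] at hline
  have hcurv := nonneg_of_isLocalMin_const_add_sq_mul (by fun_prop) hline
  linarith

theorem posSemidef_sub_of_isLocalMin_factorLoss (hA : A.IsSymm)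
    (hmin : IsLocalMin (factorLoss A) X) {v : κ → ℝ} (hXv : X *ᵥ v = 0) (hv : v ≠ 0) :
    (X * Xᵀ - A).PosSemidef := by
  refine .of_dotProduct_mulVec_nonneg ?_ fun u => ?_
  · rw [IsHermitian, conjTranspose_eq_transpose_of_trivial]
    exact isSymm_mul_transpose_sub hA X
  have hv_pos : 0 < v ⬝ᵥ v := by simpa using dotProduct_star_self_pos_iff.2 hv
  have htrace := trace_nonneg_of_isLocalMin_factorLoss hA hmin (H := vecMulVec u v)
    (by rw [transpose_vecMulVec, mul_vecMulVec, hXv, zero_vecMulVec])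
  have hquad : trace ((X * Xᵀ - A) * (vecMulVec u v * (vecMulVec u v)ᵀ)) =
      v ⬝ᵥ v * (u ⬝ᵥ (X * Xᵀ - A) *ᵥ u) := by
    rw [transpose_vecMulVec, vecMulVec_mul_vecMulVec, vecMulVec_smul, Matrix.mul_smul, trace_smul,
      mul_vecMulVec, trace_vecMulVec, smul_eq_mul, dotProduct_comm u]
  exact nonneg_of_mul_nonneg_right (hquad ▸ htrace) hv_pos

theorem card_le_rank_of_isLocalMin_factorLoss (hA : A.PosSemidef)
    (hrank : Fintype.card κ ≤ A.rank) (hmin : IsLocalMin (factorLoss A) X) :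
    Fintype.card κ ≤ X.rank := by
  by_contra hdeficient
  obtain ⟨v, hXv, hv⟩ : ∃ v, X *ᵥ v = 0 ∧ v ≠ 0 := by
    contrapose! hdeficient
    exact mulVec_injective_iff_card_le_rank.1
      ((injective_iff_map_eq_zero X.mulVecLin).2 hdeficient)
  have hE : (X * Xᵀ - A).PosSemidef :=
    posSemidef_sub_of_isLocalMin_factorLoss (by simpa using hA.isHermitian) hmin hXv hv
  have hrank_le : A.rank ≤ X.rank :=
    (rank_le_rank_of_posSemidef_sub hA hE).trans (rank_mul_le_left X Xᵀ)
  exact hdeficient (hrank.trans hrank_le)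

theorem stmt_4_general [DecidableEq κ] {P : Matrix n n ℝ} (hA : A.PosSemidef)
    (hrank : Fintype.card κ ≤ A.rank) (hP : A * P * A = A)
    (hmin : IsLocalMin (factorLoss A) X) : Xᵀ * P * X = 1 := by
  have hsymm : A.IsSymm := by simpa using hA.isHermitian
  have hcrit : A * X = X * (Xᵀ * X) := by
    have hEX := mul_eq_zero_of_isLocalMin_factorLoss hsymm hmin
    rw [Matrix.sub_mul, sub_eq_zero] at hEX
    rw [← hEX, Matrix.mul_assoc]
  exact transpose_mul_generalizedInverse_mul_eq_one hsymm hP hcrit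
    (isUnit_transpose_mul_self_of_card_le_rank
      (card_le_rank_of_isLocalMin_factorLoss hA hrank hmin))

end FactorLoss

section Eigendecomposition

variable {R n κ : Type*} [CommRing R] [Fintype n] [Fintype κ] [DecidableEq κ]
  {Q : Matrix n κ R} {D : Matrix κ κ R}

theorem mul_nonsing_inv_conj_mul (hQ : Qᵀ * Q = 1) (hD : IsUnit D) :
    Q * D * Qᵀ * (Q * D⁻¹ * Qᵀ) * (Q * D * Qᵀ) = Q * D * Qᵀ := by
  have hDD : D * D⁻¹ = 1 := mul_nonsing_inv D ((isUnit_iff_isUnit_det D).1 hD)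
  calc Q * D * Qᵀ * (Q * D⁻¹ * Qᵀ) * (Q * D * Qᵀ)
      = Q * (D * (Qᵀ * Q) * D⁻¹) * (Qᵀ * Q) * D * Qᵀ := by simp only [Matrix.mul_assoc]
    _ = Q * D * Qᵀ := by simp only [hQ, hDD, Matrix.mul_one]

theorem rank_mul_mul_transpose [Nontrivial R] (hQ : Qᵀ * Q = 1) (D : Matrix κ κ R) :
    (Q * D * Qᵀ).rank = D.rank := by
  refine le_antisymm ((rank_mul_le_left _ _).trans (rank_mul_le_right _ _)) ?_
  have hcompress : Qᵀ * (Q * D * Qᵀ) * Q = D := by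
    calc Qᵀ * (Q * D * Qᵀ) * Q = Qᵀ * Q * D * (Qᵀ * Q) := by simp only [Matrix.mul_assoc]
      _ = D := by rw [hQ, Matrix.one_mul, Matrix.mul_one]
  calc D.rank = (Qᵀ * (Q * D * Qᵀ) * Q).rank := by rw [hcompress]
    _ ≤ (Q * D * Qᵀ).rank := (rank_mul_le_left _ _).trans (rank_mul_le_right _ _)

end Eigendecomposition

theorem frobNorm_sq {m n : ℕ} (M : Matrix (Fin m) (Fin n) ℝ) :
    frobNorm M ^ 2 = trace (Mᵀ * M) := by
  rw [frobNorm, Real.sq_sqrt (by positivity), Finset.sum_comm]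
  simp only [trace, diag_apply, mul_apply, transpose_apply, pow_two]

/-- Every global minimizer `X*` of `X ↦ ‖XXᵀ − A‖_F²` (with `r ≤ r_A`) is weakly optimal:
`(X*)ᵀ A† X* = I_r`, where `A† = QΣ⁻¹Qᵀ` is the Moore–Penrose pseudoinverse of
`A = QΣQᵀ`. -/
theorem stmt_4
    (m rA r : ℕ) (hr : r ≤ rA)
    (A : Matrix (Fin m) (Fin m) ℝ)
    (Q : Matrix (Fin m) (Fin rA) ℝ) (d : Fin rA → ℝ)
    (hQ : Qᵀ * Q = 1)
    (hd : ∀ i, 0 < d i)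
    (hdmono : ∀ i j : Fin rA, i ≤ j → d j ≤ d i)
    (hA : A = Q * Matrix.diagonal d * Qᵀ)
    (Xs : Matrix (Fin m) (Fin r) ℝ)
    (hmin : ∀ X : Matrix (Fin m) (Fin r) ℝ,
      frobNorm (Xs * Xsᵀ - A) ^ 2 ≤ frobNorm (X * Xᵀ - A) ^ 2) :
    Xsᵀ * (Q * (Matrix.diagonal d)⁻¹ * Qᵀ) * Xs = 1 := by
  have hD : (diagonal d).PosDef := .diagonal hd
  have hpsd : A.PosSemidef := by
    simpa [hA] using hD.posSemidef.mul_mul_conjTranspose_same Q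
  have hrank : A.rank = rA := by
    rw [hA, rank_mul_mul_transpose hQ, rank_of_isUnit _ hD.isUnit, Fintype.card_fin]
  have hP : A * (Q * (diagonal d)⁻¹ * Qᵀ) * A = A :=
    hA ▸ mul_nonsing_inv_conj_mul hQ hD.isUnit
  have hloc : IsLocalMin (factorLoss A) Xs :=
    .of_forall fun X => by simpa only [frobNorm_sq, factorLoss] using hmin X
  exact stmt_4_general hpsd (by rwa [Fintype.card_fin, hrank]) hP hloc
end

section
/- Suppose r < r_A, the largest eigenvalue of A is σ_1(A) = 1, let Q_1 ∈ R^{m×r} consist of the first r columns of Q and Σ_1 ∈ R^{r×r} the top-left r×r block of Σ, and set X* = Q_1 Σ_1^{1/2}. If X = Q Φ for some Φ ∈ R^{r_A×r} satisfying Φᵀ Σ⁻¹ Φ = I_r (i.e., X is weakly optimal, Xᵀ A† X = I_r with A† = QΣ⁻¹Qᵀ), then ‖X − X*‖_F² ≤ 2r + 2 r^{3/2} + r · σ_{r+1}(A); in particular ‖X − X*‖_F² ≤ 3r + 2 r^{3/2}. -/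
open Matrix BigOperators

/-!
A weakly optimal matrix `Φ` (`Φᴴ Σ⁻¹ Φ = I_r`) is short: `Σ⁻¹ ≥ I / σ₁` gives
`‖Φ‖² = tr (Φᴴ Φ) ≤ σ₁ tr (Φᴴ Σ⁻¹ Φ) = σ₁ r`. The first `r` columns of `Σ^{1/2}` are themselves
weakly optimal, and multiplication by `Q` preserves the norm, so `X` and `X*` both lie in the ball
of radius `√(σ₁ r)` and `‖X - X*‖² ≤ 4 σ₁ r`. For `σ₁ = 1` this is at most
`2r + 2r^{3/2}`, since `r ≤ r^{3/2}` for a natural number `r`.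
-/

section RCLike

open scoped ComplexOrder Matrix.Norms.Frobenius

variable {𝕜 ι κ n : Type*} [RCLike 𝕜] [Fintype κ] [DecidableEq κ]

lemma inv_diagonal_of_ne_zero {K : Type*} [Field K] {v : κ → K} (hv : ∀ i, v i ≠ 0) :
    (diagonal v)⁻¹ = diagonal fun i ↦ (v i)⁻¹ := by
  refine inv_eq_right_inv ?_
  rw [diagonal_mul_diagonal, ← diagonal_one]
  exact congrArg diagonal (funext fun i ↦ mul_inv_cancel₀ (hv i))

lemma posSemidef_smul_inv_diagonal_sub_one {d : κ → ℝ} {c : ℝ} (hd : ∀ i, 0 < d i)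
    (hdc : ∀ i, d i ≤ c) : (c • (diagonal fun i ↦ (d i : 𝕜))⁻¹ - 1).PosSemidef := by
  have hdiag : c • (diagonal fun i ↦ (d i : 𝕜))⁻¹ - 1 =
      diagonal fun i ↦ ((c * (d i)⁻¹ - 1 : ℝ) : 𝕜) := by
    rw [inv_diagonal_of_ne_zero fun i ↦ RCLike.ofReal_ne_zero.2 (hd i).ne',
      ← diagonal_one, ← diagonal_smul, diagonal_sub]
    simp [RCLike.real_smul_eq_coe_mul]
  rw [hdiag, posSemidef_diagonal_iff]
  intro i
  rw [RCLike.ofReal_nonneg, sub_nonneg, ← div_eq_mul_inv]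
  exact (one_le_div (hd i)).2 (hdc i)

/-- Weak optimality of `X = QΦ` for `A = QSQᴴ` with `S` invertible, expressed through the
coordinates `Φ` of `X` in the orthonormal columns of `Q`: there `Xᴴ A† X = I` reads
`Φᴴ S⁻¹ Φ = I`. -/
def IsWeaklyOptimal [DecidableEq n] (S : Matrix κ κ 𝕜) (Φ : Matrix κ n 𝕜) : Prop :=
  Φᴴ * S⁻¹ * Φ = 1

lemma isWeaklyOptimal_sqrt_submatrix [DecidableEq n] {d : κ → ℝ} (hd : ∀ i, 0 < d i)
    (e : n ↪ κ) :
    IsWeaklyOptimal (diagonal fun i ↦ (d i : 𝕜))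
      ((diagonal fun i ↦ (√(d i) : 𝕜)).submatrix id e) := by
  set S : Matrix κ κ 𝕜 := diagonal fun i ↦ (√(d i) : 𝕜) with hS
  have hinner : Sᴴ * (diagonal fun i ↦ (d i : 𝕜))⁻¹ * S = 1 := by
    rw [inv_diagonal_of_ne_zero fun i ↦ RCLike.ofReal_ne_zero.2 (hd i).ne', hS,
      diagonal_conjTranspose, diagonal_mul_diagonal, diagonal_mul_diagonal, ← diagonal_one]
    congr 1
    funext i
    have hcancel : √(d i) * (d i)⁻¹ * √(d i) = 1 := by
      rw [mul_right_comm, Real.mul_self_sqrt (hd i).le, mul_inv_cancel₀ (hd i).ne']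
    simpa using congrArg (RCLike.ofReal : ℝ → 𝕜) hcancel
  calc (S.submatrix id e)ᴴ * (diagonal fun i ↦ (d i : 𝕜))⁻¹ * S.submatrix id e
      = (Sᴴ * (diagonal fun i ↦ (d i : 𝕜))⁻¹ * S).submatrix e e := rfl
    _ = 1 := by rw [hinner, submatrix_one_embedding]

variable [Fintype ι] [Fintype n]

lemma frobenius_norm_sq_eq_re_trace (M : Matrix ι n 𝕜) :
    ‖M‖ ^ 2 = RCLike.re (Mᴴ * M).trace := by
  simp only [frobenius_norm_def, Real.rpow_two, ← Real.sqrt_eq_rpow]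
  rw [Real.sq_sqrt (by positivity), Finset.sum_comm]
  simp only [trace, diag_apply, mul_apply, conjTranspose_apply, RCLike.star_def,
    RCLike.conj_mul, map_sum, ← RCLike.ofReal_pow, RCLike.ofReal_re]

lemma frobenius_norm_mul_of_conjTranspose_mul_self {Q : Matrix ι κ 𝕜} (hQ : Qᴴ * Q = 1)
    (M : Matrix κ n 𝕜) : ‖Q * M‖ = ‖M‖ := by
  have hgram : (Q * M)ᴴ * (Q * M) = Mᴴ * M := by
    rw [conjTranspose_mul, Matrix.mul_assoc, ← Matrix.mul_assoc Qᴴ, hQ, Matrix.one_mul]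
  rw [← sq_eq_sq₀ (norm_nonneg _) (norm_nonneg _), frobenius_norm_sq_eq_re_trace, hgram,
    frobenius_norm_sq_eq_re_trace]

lemma IsWeaklyOptimal.frobenius_norm_sq_le [DecidableEq n] {S : Matrix κ κ 𝕜} {Φ : Matrix κ n 𝕜}
    (hΦ : IsWeaklyOptimal S Φ) {c : ℝ} (hS : (c • S⁻¹ - 1).PosSemidef) :
    ‖Φ‖ ^ 2 ≤ c * Fintype.card n := by
  have hexpand : Φᴴ * (c • S⁻¹ - 1) * Φ = c • (1 : Matrix n n 𝕜) - Φᴴ * Φ := by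
    rw [Matrix.mul_sub, Matrix.sub_mul, Matrix.mul_smul, Matrix.smul_mul, Matrix.mul_one,
      show Φᴴ * S⁻¹ * Φ = 1 from hΦ]
  have htrace := (RCLike.nonneg_iff.1 (hS.conjTranspose_mul_mul_same Φ).trace_nonneg).1
  rw [hexpand, trace_sub, trace_smul, trace_one, map_sub, RCLike.smul_re, RCLike.natCast_re,
    ← frobenius_norm_sq_eq_re_trace] at htrace
  exact sub_nonneg.1 htrace

theorem stmt_9_general [DecidableEq n] {Q : Matrix ι κ 𝕜} (hQ : Qᴴ * Q = 1) {d : κ → ℝ} {c : ℝ}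
    (hd : ∀ i, 0 < d i) (hdc : ∀ i, d i ≤ c) (e : n ↪ κ) {Φ : Matrix κ n 𝕜}
    (hΦ : IsWeaklyOptimal (diagonal fun i ↦ (d i : 𝕜)) Φ) :
    ‖Q * Φ - (Q * diagonal fun i ↦ (√(d i) : 𝕜)).submatrix id e‖ ^ 2 ≤
      4 * c * Fintype.card n := by
  set Φstar := (diagonal fun i ↦ (√(d i) : 𝕜)).submatrix id e
  have hS := posSemidef_smul_inv_diagonal_sub_one (𝕜 := 𝕜) hd hdc
  have hnorm : ‖Φ‖ ^ 2 ≤ c * Fintype.card n := hΦ.frobenius_norm_sq_le hS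
  have hnorm_star : ‖Φstar‖ ^ 2 ≤ c * Fintype.card n :=
    (isWeaklyOptimal_sqrt_submatrix hd e).frobenius_norm_sq_le hS
  calc ‖Q * Φ - (Q * diagonal fun i ↦ (√(d i) : 𝕜)).submatrix id e‖ ^ 2
      = ‖Q * (Φ - Φstar)‖ ^ 2 := by rw [Matrix.mul_sub]; rfl
    _ = ‖Φ - Φstar‖ ^ 2 := by rw [frobenius_norm_mul_of_conjTranspose_mul_self hQ]
    _ ≤ (‖Φ‖ + ‖Φstar‖) ^ 2 := by gcongr; exact norm_sub_le _ _
    _ ≤ 2 * (‖Φ‖ ^ 2 + ‖Φstar‖ ^ 2) := add_sq_le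
    _ ≤ 4 * c * Fintype.card n := by linarith

lemma frobNorm_eq_frobenius_norm {m n : ℕ} (M : Matrix (Fin m) (Fin n) ℝ) :
    frobNorm M = ‖M‖ := by
  simp only [frobNorm, frobenius_norm_def, Real.sqrt_eq_rpow, Real.rpow_two, Real.norm_eq_abs,
    sq_abs]

end RCLike

lemma natCast_le_mul_sqrt_self (n : ℕ) : (n : ℝ) ≤ n * √n := by
  rcases n.eq_zero_or_pos with rfl | hn
  · simp
  · exact le_mul_of_one_le_right n.cast_nonneg (Real.one_le_sqrt.2 (mod_cast hn))

/-- Distance of a weakly optimal point to a global optimum in the symmetric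
under-parametrized setting: if `σ_1(A) = 1`, `X = QΦ` with `ΦᵀΣ⁻¹Φ = I_r`
(weak optimality), and `X* = Q_1 Σ_1^{1/2}`, then
`‖X − X*‖_F² ≤ 2r + 2r^{3/2} + r·σ_{r+1}(A) ≤ 3r + 2r^{3/2}`. -/
theorem stmt_9
    (m rA r : ℕ) (hrrA : r < rA)
    (A : Matrix (Fin m) (Fin m) ℝ)
    (Q : Matrix (Fin m) (Fin rA) ℝ) (d : Fin rA → ℝ)
    (hQ : Qᵀ * Q = 1)
    (hd : ∀ i, 0 < d i)
    (hdmono : ∀ i j : Fin rA, i ≤ j → d j ≤ d i)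
    (hA : A = Q * Matrix.diagonal d * Qᵀ)
    (hσ1 : d ⟨0, Nat.lt_of_le_of_lt (Nat.zero_le r) hrrA⟩ = 1)
    (Φ : Matrix (Fin rA) (Fin r) ℝ)
    (X : Matrix (Fin m) (Fin r) ℝ)
    (hX : X = Q * Φ)
    (hweak : Φᵀ * (Matrix.diagonal d)⁻¹ * Φ = 1)
    (Xstar : Matrix (Fin m) (Fin r) ℝ)
    (hXstar : ∀ (i : Fin m) (j : Fin r),
      Xstar i j = Q i (Fin.castLE hrrA.le j) * Real.sqrt (d (Fin.castLE hrrA.le j))) :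
    frobNorm (X - Xstar) ^ 2
        ≤ 2 * r + 2 * (r * Real.sqrt r) + r * d ⟨r, hrrA⟩ ∧
    frobNorm (X - Xstar) ^ 2 ≤ 3 * r + 2 * (r * Real.sqrt r) := by
  have hd_le_one (i) : d i ≤ 1 := hσ1 ▸ hdmono _ i (Nat.zero_le i)
  have hXstar_eq : Xstar = (Q * diagonal fun i ↦ √(d i)).submatrix id (Fin.castLEEmb hrrA.le) := by
    ext i j
    simp [hXstar]
  have hdist : frobNorm (X - Xstar) ^ 2 ≤ 4 * 1 * Fintype.card (Fin r) := by
    rw [frobNorm_eq_frobenius_norm, hX, hXstar_eq]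
    exact stmt_9_general hQ hd hd_le_one _ hweak
  rw [Fintype.card_fin] at hdist
  have hr := natCast_le_mul_sqrt_self r
  have hσ : 0 ≤ r * d ⟨r, hrrA⟩ := mul_nonneg r.cast_nonneg (hd _).le
  exact ⟨by linarith, by linarith⟩
end

section
/- Let A ∈ R^{m×n} have rank r and let Ω ∈ R^{n×r} be such that rank(AΩ) = r. Set X_1 = AΩ and Y_1 = Aᵀ X_1 (X_1ᵀ X_1)⁻¹ (the first modified ScaledGD step with η = 1 starting from X_0 = AΩ, Y_0 = 0). Then X_1 Y_1ᵀ = A; that is, ScaledGD with Nyström initialization and η = 1 achieves exact global convergence for asymmetric matrix factorization min_{X,Y} ‖XYᵀ − A‖_F² in a single step. -/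
open Matrix BigOperators

/-!
Since `X = AΩ` has the same rank as `A`, it has the same column space, so `A = XB` for some `B`.
The projection `X (XᵀX)⁻¹ Xᵀ` fixes `X`, hence also `A`: the step computes the minimizer of
`‖XYᵀ − A‖_F` over `Y`, and its residual is zero.
-/

section ColumnSpace

variable {l m n R : Type*} [Fintype l] [Fintype n]

theorem exists_eq_mul_of_range_mulVecLin_le [CommSemiring R] {A : Matrix m n R} {X : Matrix m l R}
    (h : LinearMap.range A.mulVecLin ≤ LinearMap.range X.mulVecLin) :
    ∃ B : Matrix l n R, A = X * B := by
  classical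
  have col_mem (j : n) : A.col j ∈ LinearMap.range X.mulVecLin :=
    h ⟨Pi.single j 1, A.mulVec_single_one j⟩
  choose B hB using col_mem
  refine ⟨(Matrix.of B)ᵀ, ?_⟩
  ext i j
  exact (congrFun (hB j) i).symm

theorem range_mulVecLin_mul_of_rank_mul_eq [Finite m] [Field R] {A : Matrix m n R}
    {B : Matrix n l R} (h : (A * B).rank = A.rank) :
    LinearMap.range (A * B).mulVecLin = LinearMap.range A.mulVecLin := by
  refine Submodule.eq_of_le_of_finrank_eq ?_ h
  rw [mulVecLin_mul]
  exact LinearMap.range_comp_le_range _ _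

theorem exists_eq_mul_mul_of_rank_mul_eq [Finite m] [Field R] {A : Matrix m n R}
    {B : Matrix n l R} (h : (A * B).rank = A.rank) :
    ∃ C : Matrix l n R, A = A * B * C :=
  exists_eq_mul_of_range_mulVecLin_le (range_mulVecLin_mul_of_rank_mul_eq h).ge

end ColumnSpace

section Gram

variable {m r K : Type*} [Fintype r] [DecidableEq r] [Field K]

theorem isUnit_of_rank_eq_card {A : Matrix r r K} (h : A.rank = Fintype.card r) : IsUnit A := by
  have range_eq_top : LinearMap.range A.mulVecLin = ⊤ :=
    Submodule.eq_top_of_finrank_eq (h.trans (Module.finrank_fintype_fun_eq_card K).symm)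
  exact mulVec_surjective_iff_isUnit.mp (LinearMap.range_eq_top.mp range_eq_top)

theorem isUnit_conjTranspose_mul_self_of_rank_eq_card [Fintype m] [PartialOrder K] [StarRing K]
    [StarOrderedRing K] {X : Matrix m r K} (h : X.rank = Fintype.card r) : IsUnit (Xᴴ * X) :=
  isUnit_of_rank_eq_card ((rank_conjTranspose_mul_self X).trans h)

end Gram

theorem stmt_11_general {m n r K : Type*} [Fintype m] [Fintype n] [Fintype r] [DecidableEq r]
    [Field K] [PartialOrder K] [StarRing K] [StarOrderedRing K]
    {A : Matrix m n K} (hA : A.rank = Fintype.card r) {Ω : Matrix n r K}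
    {X : Matrix m r K} (hX : X = A * Ω) (hXrank : X.rank = Fintype.card r)
    {Y : Matrix n r K} (hY : Y = Aᴴ * X * (Xᴴ * X)⁻¹) :
    X * Yᴴ = A := by
  have gram_isUnit : IsUnit (Xᴴ * X).det :=
    (isUnit_iff_isUnit_det _).mp (isUnit_conjTranspose_mul_self_of_rank_eq_card hXrank)
  obtain ⟨B, hB⟩ : ∃ B : Matrix r n K, A = X * B := by
    subst hX
    exact exists_eq_mul_mul_of_rank_mul_eq (hXrank.trans hA.symm)
  have hYstar : Yᴴ = (Xᴴ * X)⁻¹ * (Xᴴ * A) := by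
    simp only [hY, conjTranspose_mul, conjTranspose_nonsing_inv, conjTranspose_conjTranspose]
  calc X * Yᴴ = X * ((Xᴴ * X)⁻¹ * (Xᴴ * X * B)) := by rw [hYstar, Matrix.mul_assoc Xᴴ, ← hB]
    _ = X * B := by rw [nonsing_inv_mul_cancel_left _ _ gram_isUnit]
    _ = A := hB.symm

/-- One-step global convergence of modified ScaledGD with Nyström initialization and
step size `η = 1` for asymmetric exact-parametrized matrix factorization:
with `X_1 = AΩ` of rank `r = rank(A)` and `Y_1 = Aᵀ X_1 (X_1ᵀ X_1)⁻¹`,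
one has `X_1 Y_1ᵀ = A`. -/
theorem stmt_11
    (m n r : ℕ)
    (A : Matrix (Fin m) (Fin n) ℝ) (hA : A.rank = r)
    (Ω : Matrix (Fin n) (Fin r) ℝ)
    (X : Matrix (Fin m) (Fin r) ℝ) (hX : X = A * Ω)
    (hXrank : X.rank = r)
    (Y : Matrix (Fin n) (Fin r) ℝ) (hY : Y = Aᵀ * X * (Xᵀ * X)⁻¹) :
    X * Yᵀ = A := by
  simp only [← conjTranspose_eq_transpose_of_trivial] at hY ⊢
  exact stmt_11_general (by simpa using hA) hX (by simpa using hXrank) hY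
end

section
/- Let A ∈ R^{m×n}, let Ω ∈ R^{n×r} be such that X = AΩ has rank r, and set Y = Aᵀ X (Xᵀ X)⁻¹ (the first modified ScaledGD step with η = 1 starting from X_0 = AΩ, Y_0 = 0). Let G ∈ R^{n×m} be the Moore–Penrose pseudoinverse of A, i.e., AGA = A, GAG = G, (AG)ᵀ = AG, and (GA)ᵀ = GA. Then Yᵀ G X = I_r; that is, generalized weak optimality for min_{X,Y} ‖XYᵀ − A‖_F² is attained in one iteration. -/
open Matrix BigOperators

/-!
Since `AGA = A`, the matrix `AG` fixes the column space of `A`, which contains the columns of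
`X = AΩ`; hence `AGX = X`. Transposing `Y` gives `Yᵀ = LA`, where `L = (XᵀX)⁻¹Xᵀ` is a left inverse
of `X`, so `YᵀGX = L(AGX) = LX = 1`.
-/

section GeneralizedInverse

variable {m n r R : Type*} [Fintype m]

theorem transpose_mul_nonsing_inv_transpose_mul_self [Fintype r] [DecidableEq r] [CommRing R]
    (A : Matrix m n R) (X : Matrix m r R) :
    (Aᵀ * X * (Xᵀ * X)⁻¹)ᵀ = (Xᵀ * X)⁻¹ * (Xᵀ * A) := by
  simp only [transpose_mul, transpose_nonsing_inv, transpose_transpose]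

variable [Fintype n]

theorem mul_mul_cancel_of_mul_mul_eq_self [NonUnitalSemiring R]
    {A : Matrix m n R} {G : Matrix n m R} (hG : A * G * A = A) (Ω : Matrix n r R) :
    A * G * (A * Ω) = A * Ω := by
  rw [← Matrix.mul_assoc, hG]

theorem stmt_13_general [Fintype r] [DecidableEq r] [CommRing R]
    {A : Matrix m n R} {Ω : Matrix n r R}
    {X : Matrix m r R} (hX : X = A * Ω) (hXunit : IsUnit (Xᵀ * X).det)
    {Y : Matrix n r R} (hY : Y = Aᵀ * X * (Xᵀ * X)⁻¹)
    {G : Matrix n m R} (hG : A * G * A = A) :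
    Yᵀ * G * X = 1 := by
  have hAGX : A * G * X = X := by rw [hX, mul_mul_cancel_of_mul_mul_eq_self hG]
  calc
    Yᵀ * G * X = (Xᵀ * X)⁻¹ * (Xᵀ * (A * G * X)) := by
      rw [hY, transpose_mul_nonsing_inv_transpose_mul_self]
      simp only [Matrix.mul_assoc]
    _ = (Xᵀ * X)⁻¹ * (Xᵀ * X) := by rw [hAGX]
    _ = 1 := nonsing_inv_mul _ hXunit

end GeneralizedInverse

section FullRank

variable {m r K : Type*} [Fintype r] [DecidableEq r] [Field K]

theorem isUnit_of_rank_eq_card_s13 {M : Matrix r r K} (hM : M.rank = Fintype.card r) :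
    IsUnit M := by
  have range_eq_top : LinearMap.range M.mulVecLin = ⊤ :=
    Submodule.eq_top_of_finrank_eq (hM.trans (Module.finrank_fintype_fun_eq_card K).symm)
  exact mulVec_surjective_iff_isUnit.mp (LinearMap.range_eq_top.mp range_eq_top)

theorem isUnit_det_transpose_mul_self_of_rank_eq_card [Fintype m] [LinearOrder K]
    [IsStrictOrderedRing K] {X : Matrix m r K} (hX : X.rank = Fintype.card r) :
    IsUnit (Xᵀ * X).det :=
  (isUnit_iff_isUnit_det _).mp <|
    isUnit_of_rank_eq_card_s13 <| (rank_transpose_mul_self X).trans hX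

end FullRank

/-- One-step attainment of generalized weak optimality for asymmetric matrix
factorization: with `X = AΩ` of rank `r`, `Y = Aᵀ X (XᵀX)⁻¹` (the first modified
ScaledGD step with `η = 1`), and `G` the Moore–Penrose pseudoinverse of `A`,
one has `Yᵀ G X = I_r`. -/
theorem stmt_13
    (m n r : ℕ)
    (A : Matrix (Fin m) (Fin n) ℝ)
    (Ω : Matrix (Fin n) (Fin r) ℝ)
    (X : Matrix (Fin m) (Fin r) ℝ) (hX : X = A * Ω)
    (hXrank : X.rank = r)
    (Y : Matrix (Fin n) (Fin r) ℝ) (hY : Y = Aᵀ * X * (Xᵀ * X)⁻¹)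
    (G : Matrix (Fin n) (Fin m) ℝ)
    (hG1 : A * G * A = A)
    (hG2 : G * A * G = G)
    (hG3 : (A * G)ᵀ = A * G)
    (hG4 : (G * A)ᵀ = G * A) :
    Yᵀ * G * X = 1 := by
  have hXunit : IsUnit (Xᵀ * X).det :=
    isUnit_det_transpose_mul_self_of_rank_eq_card (hXrank.trans (Fintype.card_fin r).symm)
  exact stmt_13_general hX hXunit hY hG1
end
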